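/- arXiv:2402.13121 — 4 statements merged into one kernel-verified Lean document; each statement's English description precedes it below -/
import Mathlib

section
/- Let k ≥ 1 be an integer, L > 0 real, and a, b ∈ ℝ. Define ψ_k : [0,L] → ℝ by ψ_k(t) = e^{kt}/(1+e^{2kL}) + e^{-kt}/(1+e^{-2kL}), and φ(θ,t) = ψ_k(t)(a sin(kθ) + b cos(kθ)). Then ψ_k(0) = 1, ψ_k′(L) = 0, and ∫_0^L ∫_0^{2π} ( (∂_t φ)² + (∂_θ φ)² ) dθ dt = π(a²+b²) ( k/(1+e^{-2kL}) − k/(1+e^{2kL}) ). -/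
open Real MeasureTheory intervalIntegral

/-- For `k ≥ 1`, `L > 0`, `a b : ℝ`, the function
`ψ_k(t) = e^{kt}/(1+e^{2kL}) + e^{-kt}/(1+e^{-2kL})` satisfies `ψ_k(0) = 1`, `ψ_k′(L) = 0`,
and the Dirichlet energy of `φ(θ,t) = ψ_k(t)(a sin kθ + b cos kθ)` on the flat cylinder
`S¹×[0,L]` equals `π(a²+b²)(k/(1+e^{-2kL}) − k/(1+e^{2kL}))`. -/
theorem stmt_2 (k : ℕ) (hk : 1 ≤ k) (L : ℝ) (hL : 0 < L) (a b : ℝ)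
    (ψ : ℝ → ℝ)
    (hψ : ∀ t, ψ t = Real.exp (k * t) / (1 + Real.exp (2 * k * L))
        + Real.exp (-(k * t)) / (1 + Real.exp (-(2 * k * L))))
    (φ : ℝ → ℝ → ℝ)
    (hφ : ∀ θ t, φ θ t = ψ t * (a * Real.sin (k * θ) + b * Real.cos (k * θ))) :
    ψ 0 = 1 ∧ deriv ψ L = 0 ∧
    (∫ t in (0:ℝ)..L, ∫ θ in (0:ℝ)..(2 * π),
        ((deriv (fun s => φ θ s) t) ^ 2 + (deriv (fun x => φ x t) θ) ^ 2))
      = π * (a ^ 2 + b ^ 2) *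
        ((k : ℝ) / (1 + Real.exp (-(2 * k * L))) - (k : ℝ) / (1 + Real.exp (2 * k * L))) := by
  have hk0 : (k : ℝ) ≠ 0 := by
    have : (0:ℝ) < k := by exact_mod_cast hk
    exact this.ne'
  obtain ⟨A, hA⟩ : ∃ A, A = 1 / (1 + Real.exp (2 * k * L)) := ⟨_, rfl⟩
  obtain ⟨B, hB⟩ : ∃ B, B = 1 / (1 + Real.exp (-(2 * k * L))) := ⟨_, rfl⟩
  have hEpos := Real.exp_pos (2 * k * L)
  have hAB : A + B = 1 := by
    rw [hA, hB, Real.exp_neg]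
    field_simp
    ring
  have hBA : B = A * Real.exp (2 * k * L) := by
    rw [hA, hB, Real.exp_neg]
    field_simp
    ring
  have hψ' : ∀ t, ψ t = A * Real.exp (k * t) + B * Real.exp (-(k * t)) := by
    intro t
    rw [hψ, hA, hB]
    ring
  have he : ∀ t : ℝ, HasDerivAt (fun t : ℝ => Real.exp (k * t)) (Real.exp (k * t) * k) t := by
    intro t
    simpa using ((hasDerivAt_id t).const_mul (k : ℝ)).exp
  have he' : ∀ t : ℝ, HasDerivAt (fun t : ℝ => Real.exp (-(k * t)))
      (Real.exp (-(k * t)) * (-k)) t := by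
    intro t
    simpa using ((hasDerivAt_id t).const_mul (k : ℝ)).neg.exp
  obtain ⟨χ, hχ⟩ : ∃ χ : ℝ → ℝ, χ = fun t : ℝ =>
    k * (A * Real.exp (k * t) - B * Real.exp (-(k * t))) := ⟨_, rfl⟩
  have hdψ : ∀ t, HasDerivAt ψ (χ t) t := by
    intro t
    rw [funext hψ', hχ]
    refine (((he t).const_mul A).add ((he' t).const_mul B)).congr_deriv ?_
    ring
  have hdχ : ∀ t, HasDerivAt χ (k ^ 2 * ψ t) t := by
    intro t
    rw [hψ', hχ]
    refine ((((he t).const_mul A).sub ((he' t).const_mul B)).const_mul (k : ℝ)).congr_deriv ?_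
    ring
  have hχL : χ L = 0 := by
    have h1 : Real.exp (2 * k * L) * Real.exp (-(k * L)) = Real.exp (k * L) := by
      rw [← Real.exp_add]
      congr 1
      ring
    simp only [hχ]
    rw [hBA, mul_assoc, h1]
    ring
  have hψ0 : ψ 0 = 1 := by
    rw [hψ']
    simpa using hAB
  have hχ0 : χ 0 = k * (A - B) := by
    simp [hχ]
  have hs : ∀ x : ℝ, HasDerivAt (fun x : ℝ => Real.sin (k * x)) (Real.cos (k * x) * k) x := by
    intro x
    simpa using ((hasDerivAt_id x).const_mul (k : ℝ)).sin
  have hc : ∀ x : ℝ, HasDerivAt (fun x : ℝ => Real.cos (k * x)) (-Real.sin (k * x) * k) x := by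
    intro x
    simpa using ((hasDerivAt_id x).const_mul (k : ℝ)).cos
  have hd1 : ∀ θ t, deriv (fun s => φ θ s) t
      = χ t * (a * Real.sin (k * θ) + b * Real.cos (k * θ)) := by
    intro θ t
    simp only [hφ]
    exact ((hdψ t).mul_const _).deriv
  have hd2 : ∀ θ t, deriv (fun x => φ x t) θ
      = ψ t * (k * (a * Real.cos (k * θ) - b * Real.sin (k * θ))) := by
    intro θ t
    simp only [hφ]
    refine HasDerivAt.deriv (HasDerivAt.congr_deriv
      ((((hs θ).const_mul a).add ((hc θ).const_mul b)).const_mul (ψ t)) ?_)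
    ring
  refine ⟨hψ0, (hdψ L).deriv.trans hχL, ?_⟩
  have hin : ∀ t, (∫ θ in (0:ℝ)..(2 * π),
        ((deriv (fun s => φ θ s) t) ^ 2 + (deriv (fun x => φ x t) θ) ^ 2))
      = π * (a ^ 2 + b ^ 2) * (χ t * χ t + ψ t * (k ^ 2 * ψ t)) := by
    intro t
    simp only [hd1, hd2]
    have hF : ∀ x ∈ Set.uIcc (0:ℝ) (2 * π), HasDerivAt (fun x : ℝ =>
        ((χ t) ^ 2 + (ψ t) ^ 2 * k ^ 2) * ((a ^ 2 + b ^ 2) / 2) * x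
        + ((χ t) ^ 2 - (ψ t) ^ 2 * k ^ 2) / k *
          ((b ^ 2 - a ^ 2) / 2 * (Real.sin (k * x) * Real.cos (k * x))
            + a * b * (Real.sin (k * x) * Real.sin (k * x))))
        ((χ t * (a * Real.sin (k * x) + b * Real.cos (k * x))) ^ 2
          + (ψ t * (k * (a * Real.cos (k * x) - b * Real.sin (k * x)))) ^ 2) x := by
      intro x _
      refine (((hasDerivAt_id x).const_mul _).add
        (((((hs x).mul (hc x)).const_mul _).add
          (((hs x).mul (hs x)).const_mul _)).const_mul _)).congr_deriv ?_
      have h1 := Real.sin_sq_add_cos_sq (k * x)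
      field_simp
      linear_combination (-((χ t) ^ 2 + (ψ t) ^ 2 * k ^ 2) * (a ^ 2 + b ^ 2)) * h1
    rw [integral_eq_sub_of_hasDerivAt hF (Continuous.intervalIntegrable (by fun_prop) _ _)]
    have h2 : Real.sin (k * (2 * π)) = 0 := by
      have := Real.sin_nat_mul_pi (k * 2)
      push_cast at this
      rw [← this]
      congr 1
      ring
    simp only [h2, mul_zero, Real.sin_zero]
    ring
  simp only [hin]
  have hcψ : Continuous ψ := continuous_iff_continuousAt.2 fun t => (hdψ t).continuousAt
  have hcχ : Continuous χ := continuous_iff_continuousAt.2 fun t => (hdχ t).continuousAt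
  rw [intervalIntegral.integral_const_mul]
  have hout : (∫ t in (0:ℝ)..L, (χ t * χ t + ψ t * (k ^ 2 * ψ t))) = ψ L * χ L - ψ 0 * χ 0 :=
    integral_eq_sub_of_hasDerivAt (f := fun t => ψ t * χ t)
      (fun t _ => (hdψ t).mul (hdχ t))
      (Continuous.intervalIntegrable (by fun_prop) _ _)
  rw [hout, hχL, hψ0, hχ0, hA, hB]
  ring
end

section
/- Let L > 0 and let φ : S¹×[0,L] → ℝ be continuously differentiable, where S¹ = ℝ/2πℤ. Then tanh(L) · ( ∫_0^{2π} φ(θ,L)² dθ − (1/(2π)) ( ∫_0^{2π} φ(θ,L) dθ )² ) ≤ ∫_0^L ∫_0^{2π} ( (∂_θφ)² + (∂_tφ)² ) dθ dt. -/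
open Real MeasureTheory intervalIntegral

/-- Differentiation under the integral sign, for a jointly continuous derivative. -/
lemma hasDerivAt_param_aux (F F' : ℝ → ℝ → ℝ) (a b t : ℝ)
    (hF : Continuous (Function.uncurry F)) (hF' : Continuous (Function.uncurry F'))
    (hd : ∀ s θ, HasDerivAt (fun s => F s θ) (F' s θ) s) :
    HasDerivAt (fun s => ∫ θ in a..b, F s θ) (∫ θ in a..b, F' t θ) t := by
  have hc : ∀ s, Continuous (F s) := fun s => hF.comp (by fun_prop : Continuous fun θ => (s, θ))
  have hc' : ∀ s, Continuous (F' s) := fun s => hF'.comp (by fun_prop : Continuous fun θ => (s, θ))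
  obtain ⟨C, hC⟩ := (IsCompact.prod (isCompact_Icc (a := t - 1) (b := t + 1))
    (isCompact_uIcc (a := a) (b := b))).exists_bound_of_continuousOn hF'.continuousOn
  refine (intervalIntegral.hasDerivAt_integral_of_dominated_loc_of_deriv_le (bound := fun _ => C)
    (s := Set.Icc (t - 1) (t + 1)) (Icc_mem_nhds (by linarith) (by linarith)) ?_ ?_ ?_ ?_ ?_ ?_).2
  · exact Filter.Eventually.of_forall fun s => (hc s).aestronglyMeasurable
  · exact (hc t).intervalIntegrable _ _
  · exact (hc' t).aestronglyMeasurable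
  · exact Filter.Eventually.of_forall fun θ hθ s hs =>
      hC (s, θ) ⟨hs, Set.uIoc_subset_uIcc hθ⟩
  · exact intervalIntegrable_const
  · exact Filter.Eventually.of_forall fun θ _ s _ => hd s θ

/-- Wirtinger's inequality. -/
lemma wirtinger_aux (f f' : ℝ → ℝ) (hd : ∀ x, HasDerivAt f (f' x) x) (hf' : Continuous f')
    (hper : f (2 * π) = f 0) :
    (∫ x in (0:ℝ)..(2 * π), (f x) ^ 2) - (1 / (2 * π)) * (∫ x in (0:ℝ)..(2 * π), f x) ^ 2
      ≤ ∫ x in (0:ℝ)..(2 * π), (f' x) ^ 2 := by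
  have hpi := Real.pi_pos
  have hab : (0:ℝ) < 2 * π := by positivity
  have hf : Continuous f := continuous_iff_continuousAt.2 fun x => (hd x).continuousAt
  have key : ∀ g : ℝ → ℝ, Continuous g →
      HasSum (fun i => ‖fourierCoeffOn hab (fun x => (g x : ℂ)) i‖ ^ 2)
        ((2 * π)⁻¹ * ∫ x in (0:ℝ)..(2 * π), (g x) ^ 2) := by
    intro g hg
    have hgc : Continuous fun x => (g x : ℂ) := by fun_prop
    have hm : MemLp (fun x => (g x : ℂ)) 2 (volume.restrict (Set.Ioc 0 (2 * π))) := by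
      obtain ⟨C, hC⟩ := (isCompact_Icc (a := (0:ℝ)) (b := 2 * π)).exists_bound_of_continuousOn
        hgc.continuousOn
      refine MemLp.of_bound hgc.aestronglyMeasurable C ?_
      refine (ae_restrict_mem measurableSet_Ioc).mono fun x hx => hC x ⟨hx.1.le, hx.2⟩
    have := hasSum_sq_fourierCoeffOn hab hm
    simpa using this
  have h1 := key f hf
  have h2 := key f' hf'
  have h0 : ‖fourierCoeffOn hab (fun x => (f x : ℂ)) 0‖ ^ 2
      = ((2 * π)⁻¹ * ∫ x in (0:ℝ)..(2 * π), f x) ^ 2 := by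
    rw [fourierCoeffOn_eq_integral]
    simp only [neg_zero, fourier_zero, one_smul, intervalIntegral.integral_ofReal, sub_zero,
      one_div, Complex.real_smul, ← Complex.ofReal_mul, Complex.norm_real, Real.norm_eq_abs, sq_abs]
  have hs : HasSum (fun i : ℤ => if i = 0 then ‖fourierCoeffOn hab (fun x => (f x : ℂ)) 0‖ ^ 2
      else 0) (‖fourierCoeffOn hab (fun x => (f x : ℂ)) 0‖ ^ 2) := hasSum_ite_eq 0 _
  have hle := hasSum_le (fun i => ?_) h1 (h2.add hs)
  · rw [h0] at hle
    have := mul_le_mul_of_nonneg_left hle hab.le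
    have e : (2 * π) * (2 * π)⁻¹ = 1 := mul_inv_cancel₀ hab.ne'
    rw [mul_add, ← mul_assoc, ← mul_assoc, e, one_mul, one_mul, mul_pow, sq (2 * π)⁻¹, ← mul_assoc,
      ← mul_assoc, e, one_mul] at this
    rw [one_div]
    linarith
  · by_cases hi : i = 0
    · subst hi
      simp
    · simp only [hi, if_false, add_zero]
      have hc := fourierCoeffOn_of_hasDerivAt hab (f := fun x => (f x : ℂ))
        (f' := fun x => (f' x : ℂ)) hi (fun x _ => (hd x).ofReal_comp)
        ((by fun_prop : Continuous fun x => (f' x : ℂ)).intervalIntegrable _ _)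
      rw [hc, hper]
      have hi1 : (1:ℝ) ≤ |(i:ℝ)| := by exact_mod_cast Int.one_le_abs hi
      gcongr
      simp only [sub_self, mul_zero, zero_sub, norm_mul, norm_neg, norm_div, norm_one,
        Complex.norm_I, Complex.ofReal_mul, Complex.ofReal_zero, sub_zero,
        Complex.norm_real, Complex.norm_intCast, Complex.ofReal_ofNat, RCLike.norm_ofNat,
        Real.norm_eq_abs, abs_of_pos hpi, mul_one]
      rw [← mul_assoc]
      refine mul_le_of_le_one_left (norm_nonneg _) ?_
      rw [one_div, inv_mul_le_iff₀ (by positivity)]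
      nlinarith

lemma hasDerivAt_tanh_aux (t : ℝ) : HasDerivAt Real.tanh (1 - Real.tanh t ^ 2) t := by
  have h := (Real.hasDerivAt_sinh t).div (Real.hasDerivAt_cosh t) (Real.cosh_pos t).ne'
  have e : Real.tanh = Real.sinh / Real.cosh := by
    ext x; exact Real.tanh_eq_sinh_div_cosh x
  rw [e]
  refine h.congr_deriv ?_
  have := (Real.cosh_pos t).ne'
  rw [Pi.div_apply]
  field_simp

/-- Poincaré-type boundary estimate on the flat cylinder `S¹×[0,L]`: for any `C¹` function
`φ` on the cylinder (formalized as a `C¹` function on `ℝ²` that is `2π`-periodic in `θ`),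
`tanh(L)·(∫_0^{2π} φ(θ,L)² dθ − (1/2π)(∫_0^{2π} φ(θ,L) dθ)²)` is at most the Dirichlet
energy `∫_0^L ∫_0^{2π} ((∂_θφ)² + (∂_tφ)²) dθ dt`. -/
theorem stmt_4 (L : ℝ) (hL : 0 < L) (φ : ℝ → ℝ → ℝ)
    (hC1 : ContDiff ℝ 1 (fun p : ℝ × ℝ => φ p.1 p.2))
    (hper : ∀ θ t : ℝ, φ (θ + 2 * π) t = φ θ t) :
    Real.tanh L * ((∫ θ in (0:ℝ)..(2 * π), (φ θ L) ^ 2)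
        - (1 / (2 * π)) * (∫ θ in (0:ℝ)..(2 * π), φ θ L) ^ 2)
      ≤ ∫ t in (0:ℝ)..L, ∫ θ in (0:ℝ)..(2 * π),
          ((deriv (fun x => φ x t) θ) ^ 2 + (deriv (fun s => φ θ s) t) ^ 2) := by
  have hpi := Real.pi_pos
  set G : ℝ × ℝ → ℝ := fun p => φ p.1 p.2 with hG
  have hcG : Continuous G := hC1.continuous
  have hcD : Continuous (fderiv ℝ G) := hC1.continuous_fderiv (by norm_num)
  have hdG : ∀ p, HasFDerivAt G (fderiv ℝ G p) p := fun p =>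
    ((hC1.differentiable (by norm_num)) p).hasFDerivAt
  set X : ℝ → ℝ → ℝ := fun θ t => fderiv ℝ G (θ, t) (1, 0) with hX
  set Y : ℝ → ℝ → ℝ := fun θ t => fderiv ℝ G (θ, t) (0, 1) with hY
  have hXd : ∀ θ t, HasDerivAt (fun x => φ x t) (X θ t) θ := fun θ t =>
    HasFDerivAt.comp_hasDerivAt (f := fun x : ℝ => (x, t)) θ (hdG (θ, t))
      ((hasDerivAt_id' θ).prodMk (hasDerivAt_const θ t))
  have hYd : ∀ θ t, HasDerivAt (fun s => φ θ s) (Y θ t) t := fun θ t =>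
    HasFDerivAt.comp_hasDerivAt (f := fun x : ℝ => (θ, x)) t (hdG (θ, t))
      ((hasDerivAt_const t θ).prodMk (hasDerivAt_id' t))
  have hXc : Continuous fun p : ℝ × ℝ => X p.1 p.2 := hcD.clm_apply continuous_const
  have hYc : Continuous fun p : ℝ × ℝ => Y p.1 p.2 := hcD.clm_apply continuous_const
  have sw : ∀ {H : ℝ → ℝ → ℝ}, (Continuous fun p : ℝ × ℝ => H p.1 p.2) →
      Continuous fun p : ℝ × ℝ => H p.2 p.1 := fun h => h.comp continuous_swap
  have sl : ∀ {H : ℝ → ℝ → ℝ}, (Continuous fun p : ℝ × ℝ => H p.1 p.2) → ∀ t,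
      Continuous fun θ => H θ t := fun h t => h.comp (by fun_prop : Continuous fun θ => (θ, t))
  have hφs := sw (H := φ) hcG
  have hXs := sw hXc
  have hYs := sw hYc
  simp only [(hXd _ _).deriv, (hYd _ _).deriv]
  have hA : ∀ t, HasDerivAt (fun s => ∫ θ in (0:ℝ)..(2 * π), φ θ s)
      (∫ θ in (0:ℝ)..(2 * π), Y θ t) t := fun t =>
    hasDerivAt_param_aux (fun s θ => φ θ s) (fun s θ => Y θ s) _ _ t hφs hYs
      (fun s θ => hYd θ s)
  have hQ : ∀ t, HasDerivAt (fun s => ∫ θ in (0:ℝ)..(2 * π), (φ θ s) ^ 2)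
      (∫ θ in (0:ℝ)..(2 * π), 2 * (φ θ t * Y θ t)) t := fun t =>
    hasDerivAt_param_aux (fun s θ => (φ θ s) ^ 2) (fun s θ => 2 * (φ θ s * Y θ s)) _ _ t
      (hφs.pow 2) (continuous_const.mul (hφs.mul hYs))
      (fun s θ => by
        refine ((hYd θ s).fun_pow 2).congr_deriv ?_
        norm_num; ring)
  have hF : ∀ t, HasDerivAt (fun s => Real.tanh s * ((∫ θ in (0:ℝ)..(2 * π), (φ θ s) ^ 2)
        - (1 / (2 * π)) * (∫ θ in (0:ℝ)..(2 * π), φ θ s) ^ 2)) _ t := fun t =>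
    (hasDerivAt_tanh_aux t).mul ((hQ t).sub (((hA t).pow 2).const_mul (1 / (2 * π))))
  have hEc : Continuous fun t => ∫ θ in (0:ℝ)..(2 * π), ((X θ t) ^ 2 + (Y θ t) ^ 2) :=
    intervalIntegral.continuous_parametric_intervalIntegral_of_continuous'
      (f := fun t θ => (X θ t) ^ 2 + (Y θ t) ^ 2) (by
        simp only [Function.uncurry_def]; fun_prop) _ _
  have main := sub_le_integral_of_hasDeriv_right_of_le hL.le
    (fun t _ => (hF t).continuousAt.continuousWithinAt)
    (fun t _ => (hF t).hasDerivWithinAt)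
    (hEc.continuousOn.integrableOn_compact isCompact_Icc)
    (fun t _ => ?_)
  · simpa using main
  · have cφ := sl (H := φ) hcG t
    have cX := sl hXc t
    have cY := sl hYc t
    have hW := wirtinger_aux (fun θ => φ θ t) (fun θ => X θ t) (fun θ => hXd θ t) cX
      (by simpa using hper 0 t)
    have ii : ∀ {g : ℝ → ℝ}, Continuous g → IntervalIntegrable g volume 0 (2 * π) :=
      fun h => h.intervalIntegrable _ _
    rw [intervalIntegral.integral_add (ii (by fun_prop)) (ii (by fun_prop)),
      intervalIntegral.integral_const_mul]
    have hsq : ∀ τ m : ℝ, 0 ≤ τ ^ 2 * (∫ θ in (0:ℝ)..(2 * π), (φ θ t) ^ 2)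
        - 2 * τ ^ 2 * m * (∫ θ in (0:ℝ)..(2 * π), φ θ t) + τ ^ 2 * m ^ 2 * (2 * π)
        - 2 * τ * (∫ θ in (0:ℝ)..(2 * π), φ θ t * Y θ t)
        + 2 * τ * m * (∫ θ in (0:ℝ)..(2 * π), Y θ t)
        + ∫ θ in (0:ℝ)..(2 * π), (Y θ t) ^ 2 := by
      intro τ m
      have h0 : 0 ≤ ∫ θ in (0:ℝ)..(2 * π), (τ * (φ θ t - m) - Y θ t) ^ 2 :=
        intervalIntegral.integral_nonneg (by positivity) fun _ _ => sq_nonneg _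
      have he : (fun θ => (τ * (φ θ t - m) - Y θ t) ^ 2) = fun θ =>
          τ ^ 2 * (φ θ t) ^ 2 - 2 * τ ^ 2 * m * φ θ t + τ ^ 2 * m ^ 2
          - 2 * τ * (φ θ t * Y θ t) + 2 * τ * m * Y θ t + (Y θ t) ^ 2 := by
        ext θ; ring
      rw [he, intervalIntegral.integral_add (ii (by fun_prop)) (ii (by fun_prop)),
        intervalIntegral.integral_add (ii (by fun_prop)) (ii (by fun_prop)),
        intervalIntegral.integral_sub (ii (by fun_prop)) (ii (by fun_prop)),
        intervalIntegral.integral_add (ii (by fun_prop)) (ii (by fun_prop)),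
        intervalIntegral.integral_sub (ii (by fun_prop)) (ii (by fun_prop)),
        intervalIntegral.integral_const_mul, intervalIntegral.integral_const_mul,
        intervalIntegral.integral_const_mul, intervalIntegral.integral_const_mul,
        intervalIntegral.integral_const_mul, intervalIntegral.integral_const, smul_eq_mul] at h0
      linarith
    have h := hsq (Real.tanh t) ((1 / (2 * π)) * ∫ θ in (0:ℝ)..(2 * π), φ θ t)
    have e : 1 / (2 * π) * (2 * π) = 1 := by field_simp
    generalize (1 / (2 * π)) = c at *
    generalize (∫ θ in (0:ℝ)..(2 * π), φ θ t) = A at *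
    have e2 : Real.tanh t ^ 2 * (c * A) ^ 2 * (2 * π) = Real.tanh t ^ 2 * c * A ^ 2 := by
      linear_combination (Real.tanh t ^ 2 * c * A ^ 2) * e
    rw [e2] at h
    simp only [Nat.cast_ofNat, Nat.add_one_sub_one, pow_one]
    nlinarith
end

section
/- Let H be a real inner product space, let (e_i)_{i∈I} be a finite orthonormal family in H, let (c_i)_{i∈I} be real numbers, and let u ∈ H satisfy |u| ≤ 1. Set v = Σ_{i∈I} c_i (e_i − ⟨u,e_i⟩ u). Then |v|² ≥ ( Σ_{i∈I} c_i² ) · ( 1 − 2 Σ_{i∈I} ⟨u,e_i⟩² ). -/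
open scoped InnerProductSpace

/-- Let `(e_i)` be a finite orthonormal family in a real inner product space `H`, `(c_i)`
real numbers, and `u ∈ H` with `|u| ≤ 1`.  Then `v = Σ c_i (e_i − ⟨u,e_i⟩u)` satisfies
`|v|² ≥ (Σ c_i²)(1 − 2 Σ ⟨u,e_i⟩²)`. -/
theorem stmt_8 {H : Type*} [NormedAddCommGroup H] [InnerProductSpace ℝ H]
    {I : Type*} [Fintype I] (e : I → H) (he : Orthonormal ℝ e)
    (c : I → ℝ) (u : H) (hu : ‖u‖ ≤ 1) :
    ‖∑ i, c i • (e i - ⟪u, e i⟫_ℝ • u)‖ ^ 2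
      ≥ (∑ i, c i ^ 2) * (1 - 2 * ∑ i, ⟪u, e i⟫_ℝ ^ 2) := by
  have hv : ∑ i, c i • (e i - ⟪u, e i⟫_ℝ • u)
      = (∑ i, c i • e i) - (∑ i, c i * ⟪u, e i⟫_ℝ) • u := by
    simp only [smul_sub, Finset.sum_sub_distrib, smul_smul, Finset.sum_smul]
  have hw : ‖∑ i, c i • e i‖ ^ 2 = ∑ i, c i ^ 2 := by
    rw [← real_inner_self_eq_norm_sq, he.inner_sum]
    simp [sq]
  have hi : ⟪∑ i, c i • e i, u⟫_ℝ = ∑ i, c i * ⟪u, e i⟫_ℝ := by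
    rw [real_inner_comm, inner_sum]
    simp only [real_inner_smul_right]
  have hcs : (∑ i, c i * ⟪u, e i⟫_ℝ) ^ 2 ≤ (∑ i, c i ^ 2) * ∑ i, ⟪u, e i⟫_ℝ ^ 2 :=
    Finset.sum_mul_sq_le_sq_mul_sq _ _ _
  rw [hv, norm_sub_sq_real, hw, real_inner_smul_right, hi, norm_smul, mul_pow,
    Real.norm_eq_abs, sq_abs]
  nlinarith [mul_nonneg (sq_nonneg (∑ i, c i * ⟪u, e i⟫_ℝ)) (sq_nonneg ‖u‖)]
end

section
/- Let a ≥ b > 0 > c be real numbers and let I = { x ∈ ℝ³ : |x| = 1 and a x₁² + b x₂² + c x₃² = 0 }. Then I is nonempty, every x ∈ I satisfies x₃ ≠ 0, and I has exactly two connected components, namely I⁺ = I ∩ {x₃ > 0} and I⁻ = I ∩ {x₃ < 0}, each of which is homeomorphic to a circle (via the projection (x₁,x₂,x₃) ↦ (x₁,x₂) onto the ellipse ((a−c)/(−c))x₁² + ((b−c)/(−c))x₂² = 1). -/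
lemma aux_norm3 (x : EuclideanSpace ℝ (Fin 3)) :
    ‖x‖ = 1 ↔ x 0 ^ 2 + x 1 ^ 2 + x 2 ^ 2 = 1 := by
  have h : ‖x‖ ^ 2 = x 0 ^ 2 + x 1 ^ 2 + x 2 ^ 2 := by
    rw [EuclideanSpace.real_norm_sq_eq, Fin.sum_univ_three]
  have h0 := norm_nonneg x
  constructor
  · intro h1
    rw [← h, h1]; norm_num
  · intro h1
    nlinarith

lemma aux_norm2 (x : EuclideanSpace ℝ (Fin 2)) :
    x ∈ Metric.sphere (0 : EuclideanSpace ℝ (Fin 2)) 1 ↔ x 0 ^ 2 + x 1 ^ 2 = 1 := by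
  have h : ‖x‖ ^ 2 = x 0 ^ 2 + x 1 ^ 2 := by
    rw [EuclideanSpace.real_norm_sq_eq, Fin.sum_univ_two]
  have h0 := norm_nonneg x
  rw [mem_sphere_zero_iff_norm]
  constructor
  · intro h1
    rw [← h, h1]; norm_num
  · intro h1
    nlinarith

/-- The half of `I` with sign `s` is homeomorphic to the circle. -/
lemma aux_homeo (a b c s : ℝ) (hab : b ≤ a) (hb : 0 < b) (hc : c < 0) (hs : s ^ 2 = 1)
    (J : Set (EuclideanSpace ℝ (Fin 3)))
    (hJ : ∀ x, x ∈ J ↔ (x 0 ^ 2 + x 1 ^ 2 + x 2 ^ 2 = 1 ∧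
      a * x 0 ^ 2 + b * x 1 ^ 2 + c * x 2 ^ 2 = 0) ∧ 0 < s * x 2) :
    Nonempty (J ≃ₜ Metric.sphere (0 : EuclideanSpace ℝ (Fin 2)) 1) := by
  obtain ⟨p, hp, hp2⟩ : ∃ p : ℝ, 0 < p ∧ p ^ 2 * (-c) = a - c := by
    have h : 0 < (a - c) / (-c) := div_pos (by linarith) (by linarith)
    refine ⟨√((a - c) / (-c)), Real.sqrt_pos.2 h, ?_⟩
    rw [Real.sq_sqrt h.le, div_mul_cancel₀]
    linarith
  obtain ⟨q, hq, hq2⟩ : ∃ q : ℝ, 0 < q ∧ q ^ 2 * (-c) = b - c := by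
    have h : 0 < (b - c) / (-c) := div_pos (by linarith) (by linarith)
    refine ⟨√((b - c) / (-c)), Real.sqrt_pos.2 h, ?_⟩
    rw [Real.sq_sqrt h.le, div_mul_cancel₀]
    linarith
  have hcn : c ≠ 0 := hc.ne
  have key : ∀ v w : ℝ, (p * v) ^ 2 + (q * w) ^ 2 = 1 → 0 < 1 - v ^ 2 - w ^ 2 ∧
      a * v ^ 2 + b * w ^ 2 + c * (1 - v ^ 2 - w ^ 2) = 0 := by
    intro v w h
    have h1 : (a - c) * v ^ 2 + (b - c) * w ^ 2 = -c := by
      rw [← hp2, ← hq2]; linear_combination (-c) * h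
    refine ⟨?_, by linarith⟩
    by_contra hn
    push Not at hn
    have h2 : 0 ≤ c * (1 - v ^ 2 - w ^ 2) := mul_nonneg_of_nonpos_of_nonpos hc.le hn
    have h3 : 0 ≤ (a - b) * v ^ 2 := mul_nonneg (by linarith) (sq_nonneg v)
    have h4 : 0 < b * (v ^ 2 + w ^ 2) := mul_pos hb (by linarith)
    linarith
  refine ⟨
    { toFun := fun x => ⟨!₂[p * x.1 0, q * x.1 1], ?_⟩
      invFun := fun u => ⟨!₂[u.1 0 / p, u.1 1 / q,
        s * √(1 - (u.1 0 / p) ^ 2 - (u.1 1 / q) ^ 2)], ?_⟩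
      left_inv := ?_
      right_inv := ?_
      continuous_toFun := ?_
      continuous_invFun := ?_ }⟩
  · rw [aux_norm2]
    obtain ⟨⟨h1, h2⟩, -⟩ := (hJ _).1 x.2
    simp only [Matrix.cons_val_zero, Matrix.cons_val_one]
    apply mul_left_cancel₀ (neg_ne_zero.2 hcn)
    linear_combination (x.1 0) ^ 2 * hp2 + (x.1 1) ^ 2 * hq2 - c * h1 + h2
  · have hu := (aux_norm2 _).1 u.2
    obtain ⟨k1, k2⟩ := key (u.1 0 / p) (u.1 1 / q) (by
      rw [mul_div_cancel₀ _ hp.ne', mul_div_cancel₀ _ hq.ne', hu])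
    rw [hJ]
    have k3 := Real.sq_sqrt k1.le
    have k4 := Real.sqrt_pos.2 k1
    simp only [Matrix.cons_val_zero, Matrix.cons_val_one, Matrix.cons_val]
    rw [mul_pow, hs, k3, one_mul, ← mul_assoc, ← sq, hs, one_mul]
    exact ⟨⟨by ring, k2⟩, k4⟩
  · intro x
    obtain ⟨⟨h1, h2⟩, h3⟩ := (hJ _).1 x.2
    have e : 1 - x.1 0 ^ 2 - x.1 1 ^ 2 = (s * x.1 2) ^ 2 := by
      rw [mul_pow, hs]; linarith
    apply Subtype.ext
    ext i
    fin_cases i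
    · simp [hp.ne']
    · simp [hq.ne']
    · simp only [Matrix.cons_val_zero, Matrix.cons_val_one, Matrix.cons_val,
        mul_div_cancel_left₀ _ hp.ne', mul_div_cancel_left₀ _ hq.ne', Fin.reduceFinMk]
      rw [e, Real.sqrt_sq h3.le, ← mul_assoc, ← sq, hs, one_mul]
  · intro u
    apply Subtype.ext
    ext i
    fin_cases i
    · simp [mul_div_cancel₀ _ hp.ne']
    · simp [mul_div_cancel₀ _ hq.ne']
  · refine Continuous.subtype_mk ?_ _
    refine (PiLp.continuous_toLp 2 _).comp (continuous_pi fun i => ?_)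
    fin_cases i <;> simp <;> fun_prop
  · refine Continuous.subtype_mk ?_ _
    refine (PiLp.continuous_toLp 2 _).comp (continuous_pi fun i => ?_)
    fin_cases i <;> simp <;> fun_prop

lemma aux_conn (J : Set (EuclideanSpace ℝ (Fin 3)))
    (h : Nonempty (J ≃ₜ Metric.sphere (0 : EuclideanSpace ℝ (Fin 2)) 1)) : IsConnected J := by
  obtain ⟨e⟩ := h
  have h1 : IsConnected (Metric.sphere (0 : EuclideanSpace ℝ (Fin 2)) 1) := by
    apply isConnected_sphere _ _ zero_le_one
    rw [← Module.finrank_eq_rank]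
    simp
  rw [isConnected_iff_connectedSpace] at h1 ⊢
  exact e.symm.surjective.connectedSpace e.symm.continuous

/-- Let `a ≥ b > 0 > c` and `I = {x ∈ ℝ³ : |x| = 1, a x₁² + b x₂² + c x₃² = 0}`.  Then `I`
is nonempty, every `x ∈ I` has `x₃ ≠ 0`, `I` lies on the cylinder over the ellipse
`((a−c)/(−c)) x₁² + ((b−c)/(−c)) x₂² = 1`, and `I` has exactly two connected components
`I⁺ = I ∩ {x₃ > 0}` and `I⁻ = I ∩ {x₃ < 0}`, each homeomorphic to a circle. -/
theorem stmt_13 (a b c : ℝ) (hab : b ≤ a) (hb : 0 < b) (hc : c < 0)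
    (I Iplus Iminus : Set (EuclideanSpace ℝ (Fin 3)))
    (hI : I = {x | ‖x‖ = 1 ∧ a * x 0 ^ 2 + b * x 1 ^ 2 + c * x 2 ^ 2 = 0})
    (hIplus : Iplus = {x ∈ I | 0 < x 2})
    (hIminus : Iminus = {x ∈ I | x 2 < 0}) :
    I.Nonempty ∧
    (∀ x ∈ I, x 2 ≠ 0) ∧
    (∀ x ∈ I, (a - c) / (-c) * x 0 ^ 2 + (b - c) / (-c) * x 1 ^ 2 = 1) ∧
    I = Iplus ∪ Iminus ∧
    Disjoint Iplus Iminus ∧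
    IsConnected Iplus ∧
    IsConnected Iminus ∧
    (∀ x ∈ I, connectedComponentIn I x = Iplus ∨ connectedComponentIn I x = Iminus) ∧
    Nonempty (Iplus ≃ₜ Metric.sphere (0 : EuclideanSpace ℝ (Fin 2)) 1) ∧
    Nonempty (Iminus ≃ₜ Metric.sphere (0 : EuclideanSpace ℝ (Fin 2)) 1) := by
  have hmem : ∀ x, x ∈ I ↔ (x 0 ^ 2 + x 1 ^ 2 + x 2 ^ 2 = 1 ∧
      a * x 0 ^ 2 + b * x 1 ^ 2 + c * x 2 ^ 2 = 0) := by
    intro x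
    rw [hI, Set.mem_ofPred_eq, aux_norm3]
  have hP : Nonempty (Iplus ≃ₜ Metric.sphere (0 : EuclideanSpace ℝ (Fin 2)) 1) := by
    apply aux_homeo a b c 1 hab hb hc (by norm_num)
    intro x
    rw [hIplus, Set.mem_ofPred_eq, hmem, one_mul]
  have hM : Nonempty (Iminus ≃ₜ Metric.sphere (0 : EuclideanSpace ℝ (Fin 2)) 1) := by
    apply aux_homeo a b c (-1) hab hb hc (by norm_num)
    intro x
    rw [hIminus, Set.mem_ofPred_eq, hmem, neg_one_mul, neg_pos]
  have cP := aux_conn _ hP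
  have cM := aux_conn _ hM
  have hPI : Iplus ⊆ I := by rw [hIplus]; exact fun x hx => hx.1
  have hMI : Iminus ⊆ I := by rw [hIminus]; exact fun x hx => hx.1
  have hne : ∀ x ∈ I, x 2 ≠ 0 := by
    intro x hx h0
    obtain ⟨h1, h2⟩ := (hmem x).1 hx
    rw [h0] at h1 h2
    have h3 : 0 ≤ (a - b) * x 0 ^ 2 := mul_nonneg (by linarith) (sq_nonneg _)
    have h4 : 0 < b * (x 0 ^ 2 + x 1 ^ 2) := mul_pos hb (by linarith)
    linarith
  have hcont : Continuous fun x : EuclideanSpace ℝ (Fin 3) => x 2 := by fun_prop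
  have hsign : ∀ x ∈ I, ∀ y ∈ connectedComponentIn I x,
      ∀ z ∈ connectedComponentIn I x, y 2 < 0 → ¬ 0 < z 2 := by
    intro x hx y hy z hz hy0 hz0
    obtain ⟨w, hw, hw0⟩ := isPreconnected_connectedComponentIn.intermediate_value hy hz
      hcont.continuousOn ⟨hy0.le, hz0.le⟩
    exact hne w (connectedComponentIn_subset _ _ hw) hw0
  refine ⟨cP.nonempty.mono hPI, hne, ?_, ?_, ?_, cP, cM, ?_, hP, hM⟩
  · intro x hx
    obtain ⟨h1, h2⟩ := (hmem x).1 hx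
    have hcn : c ≠ 0 := hc.ne
    field_simp
    linear_combination c * h1 - h2
  · ext x
    constructor
    · intro hx
      rcases lt_or_gt_of_ne (hne x hx) with h | h
      · right; rw [hIminus]; exact ⟨hx, h⟩
      · left; rw [hIplus]; exact ⟨hx, h⟩
    · rintro (h | h)
      · exact hPI h
      · exact hMI h
  · rw [Set.disjoint_left, hIplus, hIminus]
    rintro x ⟨-, h1⟩ ⟨-, h2⟩
    exact lt_asymm h1 h2
  · intro x hx
    have hxx := mem_connectedComponentIn hx
    rcases lt_or_gt_of_ne (hne x hx) with h | h
    · right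
      apply Set.Subset.antisymm
      · intro y hy
        have hyI := connectedComponentIn_subset _ _ hy
        rw [hIminus]
        exact ⟨hyI, lt_of_le_of_ne (not_lt.1 (hsign x hx x hxx y hy h)) (hne y hyI)⟩
      · exact cM.isPreconnected.subset_connectedComponentIn
          (by rw [hIminus]; exact ⟨hx, h⟩) hMI
    · left
      apply Set.Subset.antisymm
      · intro y hy
        have hyI := connectedComponentIn_subset _ _ hy
        rw [hIplus]
        exact ⟨hyI, lt_of_le_of_ne (not_lt.1 fun h' => hsign x hx y hy x hxx h' h)
          (hne y hyI).symm⟩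
      · exact cP.isPreconnected.subset_connectedComponentIn
          (by rw [hIplus]; exact ⟨hx, h⟩) hPI
end
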